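/- Let L be an infeasible linear pencil of size m in n variables. Then −1 ∈ M_L^(2^(min{m−1, n})−1). -/

import Mathlib

open MvPolynomial Matrix

/-- The linear pencil `L = A 0 + X 1 * A 1 + ... + X n * A n` as a symmetric matrix
with entries in the polynomial ring `ℝ[X 1, ..., X n]`. -/
noncomputable def pencilPoly {n m : ℕ} (A : Fin (n+1) → Matrix (Fin m) (Fin m) ℝ) :
    Matrix (Fin m) (Fin m) (MvPolynomial (Fin n) ℝ) :=
  fun a b => MvPolynomial.C (A 0 a b) + ∑ i : Fin n, MvPolynomial.X i * MvPolynomial.C (A i.succ a b)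

/-- Evaluation of the pencil at a point `x ∈ ℝⁿ`. -/
def pencilEval {n m : ℕ} (A : Fin (n+1) → Matrix (Fin m) (Fin m) ℝ) (x : Fin n → ℝ) :
    Matrix (Fin m) (Fin m) ℝ :=
  A 0 + ∑ i : Fin n, x i • A i.succ

/-- The spectrahedron `S_L = {x ∈ ℝⁿ ∣ L(x) ⪰ 0}`. -/
def specSet {n m : ℕ} (A : Fin (n+1) → Matrix (Fin m) (Fin m) ℝ) : Set (Fin n → ℝ) :=
  {x | (pencilEval A x).PosSemidef}

/-- `vᵀ L v` for a vector `v` of polynomials. -/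
noncomputable def vLv {n m : ℕ} (A : Fin (n+1) → Matrix (Fin m) (Fin m) ℝ)
    (v : Fin m → MvPolynomial (Fin n) ℝ) : MvPolynomial (Fin n) ℝ :=
  ∑ a : Fin m, ∑ b : Fin m, v a * pencilPoly A a b * v b

/-- Membership in the quadratic module `M_L` associated to the pencil `L`:
`p = s + Σⱼ vⱼᵀ L vⱼ` with `s` a sum of squares. -/
def memQM {n m : ℕ} (A : Fin (n+1) → Matrix (Fin m) (Fin m) ℝ)
    (p : MvPolynomial (Fin n) ℝ) : Prop :=
  ∃ (k r : ℕ) (q : Fin k → MvPolynomial (Fin n) ℝ)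
    (v : Fin r → Fin m → MvPolynomial (Fin n) ℝ),
    p = ∑ i, (q i)^2 + ∑ j, vLv A (v j)

/-- Membership in the truncated quadratic module `M_L^(k)` associated to `L`:
`p = Σᵢ pᵢ² + Σⱼ vⱼᵀ L vⱼ` where the `pᵢ` and all entries of the `vⱼ` have degree `≤ k`. -/
def memQMdeg {n m : ℕ} (A : Fin (n+1) → Matrix (Fin m) (Fin m) ℝ) (k : ℕ)
    (p : MvPolynomial (Fin n) ℝ) : Prop :=
  ∃ (k₁ k₂ : ℕ) (q : Fin k₁ → MvPolynomial (Fin n) ℝ)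
    (v : Fin k₂ → Fin m → MvPolynomial (Fin n) ℝ),
    (∀ i, (q i).totalDegree ≤ k) ∧ (∀ j a, (v j a).totalDegree ≤ k) ∧
    p = ∑ i, (q i)^2 + ∑ j, vLv A (v j)

section Separation

/-- In a finite-dimensional space the convex hull of a compact set is compact. -/
lemma isCompact_convexHull_of_isCompact {E : Type*} [NormedAddCommGroup E] [NormedSpace ℝ E]
    [FiniteDimensional ℝ E] {s : Set E} (hs : IsCompact s) : IsCompact (convexHull ℝ s) := by
  rcases s.eq_empty_or_nonempty with rfl | ⟨s₀, hs₀⟩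
  · simp
  set N := Module.finrank ℝ E + 1
  have hcomp : IsCompact (Set.image (fun p : (Fin N → ℝ) × (Fin N → E) => ∑ i, p.1 i • p.2 i)
      (stdSimplex ℝ (Fin N) ×ˢ Set.univ.pi fun _ => s)) :=
    ((isCompact_stdSimplex ℝ (Fin N)).prod (isCompact_univ_pi fun _ => hs)).image (by fun_prop)
  convert hcomp
  refine Set.Subset.antisymm (fun x hx => ?_) ?_
  · obtain ⟨ι, _, z, w, hz, hind, hw, hw1, rfl⟩ := eq_pos_convex_span_of_mem_convexHull hx
    have hcard : Fintype.card ι ≤ N :=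
      hind.card_le_finrank_succ.trans (Nat.succ_le_succ (Submodule.finrank_le _))
    obtain ⟨e⟩ : Nonempty (ι ↪ Fin N) :=
      Function.Embedding.nonempty_of_card_le (by simpa using hcard)
    have hext (j : Fin N) (hj : j ∉ Set.range e) : Function.extend e w 0 j = 0 :=
      Function.extend_apply' _ _ _ (by simpa using hj)
    refine ⟨(Function.extend e w 0, Function.extend e z fun _ => s₀), ⟨⟨fun j => ?_, ?_⟩, ?_⟩, ?_⟩
    · by_cases hj : j ∈ Set.range e
      · obtain ⟨i, rfl⟩ := hj
        simpa [e.injective.extend_apply] using (hw i).le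
      · exact (hext j hj).ge
    · rw [← hw1]
      exact (Fintype.sum_of_injective e e.injective _ _ hext
        fun i => (e.injective.extend_apply _ _ _).symm).symm
    · intro j _
      by_cases hj : j ∈ Set.range e
      · obtain ⟨i, rfl⟩ := hj
        simpa [e.injective.extend_apply] using hz ⟨i, rfl⟩
      · simpa [Function.extend_apply' _ _ _ (by simpa using hj)] using hs₀
    · exact (Fintype.sum_of_injective e e.injective _ _
        (fun j hj => by simp [hext j hj])
        fun i => by simp [e.injective.extend_apply]).symm
  · rintro _ ⟨⟨w, z⟩, ⟨hw, hz⟩, rfl⟩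
    exact (convex_convexHull ℝ s).sum_mem (fun i _ => hw.1 i) hw.2
      fun i _ => subset_convexHull ℝ s (hz i trivial)

/-- A theorem of alternatives for a compact family of affine functions
`y ↦ q₀ v + ∑ j, y j * q j v`: either some `y` makes all of them nonnegative, or a convex
combination of finitely many of them is a nonpositive constant. -/
lemma exists_nonneg_or_exists_convex_combination {α : Type*} [TopologicalSpace α]
    [Nonempty α] {d : ℕ}
    {T : Set α} (hT : IsCompact T) {q₀ : α → ℝ} {q : Fin d → α → ℝ}
    (hq₀ : Continuous q₀) (hq : ∀ j, Continuous (q j)) :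
    (∃ y : Fin d → ℝ, ∀ v ∈ T, 0 ≤ q₀ v + ∑ j, y j * q j v) ∨
    ∃ (c : ℝ) (ι : Type) (s : Finset ι) (w : ι → ℝ) (z : ι → α), 0 ≤ c ∧
      (∀ i ∈ s, 0 ≤ w i) ∧ ∑ i ∈ s, w i = 1 ∧ (∀ i ∈ s, z i ∈ T) ∧
      ∑ i ∈ s, w i * q₀ (z i) = -c ∧ ∀ j, ∑ i ∈ s, w i * q j (z i) = 0 := by
  set Φ : α → ℝ × (Fin d → ℝ) := fun v => (q₀ v, fun j => q j v) with hΦ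
  have hΦc : Continuous Φ := by fun_prop
  have hD : IsCompact (convexHull ℝ (Set.image Φ T)) := isCompact_convexHull_of_isCompact (hT.image hΦc)
  set R : Set (ℝ × (Fin d → ℝ)) := Set.Iic 0 ×ˢ {0}
  by_cases hdis : Disjoint R (convexHull ℝ (Set.image Φ T))
  · left
    obtain ⟨φ, a, b, ha, hab, hb⟩ := geometric_hahn_banach_closed_compact
      ((convex_Iic (0 : ℝ)).prod (convex_singleton (0 : Fin d → ℝ)))
      (isClosed_Iic.prod isClosed_singleton) (convex_convexHull ℝ (Set.image Φ T)) hD hdis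
    have ha0 : 0 < a := by simpa using ha 0 (by simp)
    have hφ (p : ℝ × (Fin d → ℝ)) :
        φ p = p.1 * φ (1, 0) + ∑ j, p.2 j * φ (0, Pi.single j 1) := by
      have hp : p = p.1 • ((1, 0) : ℝ × (Fin d → ℝ)) +
          ∑ j, p.2 j • ((0, Pi.single j 1) : ℝ × (Fin d → ℝ)) := by
        refine Prod.ext ?_ ?_
        · simp [Prod.fst_sum]
        · ext i
          simp [Prod.snd_sum, Finset.sum_apply, Pi.single_apply]
      conv_lhs => rw [hp]
      simp only [map_add, map_sum, map_smul, smul_eq_mul]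
    have hφ1 : 0 ≤ φ (1, 0) := by
      by_contra! hneg
      have := ha (a / φ (1, 0), 0) (by simp [div_nonpos_iff, ha0.le, hneg.le])
      rw [hφ] at this
      simp [hneg.ne] at this
    obtain ⟨B, hB⟩ := hT.exists_bound_of_continuousOn hq₀.continuousOn
    set M := |B| + 1
    have hM : 0 < M := by positivity
    set e := φ (1, 0) + a / M with he
    have he0 : 0 < e := by positivity
    refine ⟨fun j => φ (0, Pi.single j 1) / e, fun v hv => ?_⟩
    have h1 := hb (Φ v) (subset_convexHull ℝ _ ⟨v, hv, rfl⟩)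
    rw [hφ] at h1
    simp only [hΦ] at h1
    have h2 : -M ≤ q₀ v := by
      have := abs_le.1 (hB v hv)
      have := le_abs_self B
      simp only [M]
      linarith
    have h3 : -a ≤ q₀ v * (a / M) := by
      have : -a = -M * (a / M) := by field_simp
      rw [this]
      gcongr
    have h4 : q₀ v + ∑ j, φ (0, Pi.single j 1) / e * q j v =
        (q₀ v * e + ∑ j, q j v * φ (0, Pi.single j 1)) / e := by
      rw [add_div, Finset.sum_div, mul_div_cancel_right₀ _ he0.ne']
      congr 1
      exact Finset.sum_congr rfl fun j _ => by ring
    rw [h4]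
    refine div_nonneg ?_ he0.le
    rw [he, mul_add]
    linarith
  · right
    obtain ⟨p, hpR, hpD⟩ := Set.not_disjoint_iff.1 hdis
    rw [convexHull_eq] at hpD
    obtain ⟨ι, s, w, z, hw, hw1, hz, hzp⟩ := hpD
    choose! u hu hzu using hz
    rw [Finset.centerMass_eq_of_sum_1 _ _ hw1] at hzp
    obtain ⟨hp1, hp2⟩ := hpR
    refine ⟨-p.1, ι, s, w, u, by simpa using hp1, hw, hw1, hu, ?_, fun j => ?_⟩
    · rw [neg_neg, ← hzp, Prod.fst_sum]
      exact Finset.sum_congr rfl fun i hi => by rw [← hzu i hi]; simp [hΦ]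
    · have h := congrFun (congrArg Prod.snd hzp) j
      rw [Set.mem_singleton_iff.1 hp2, Prod.snd_sum, Finset.sum_apply] at h
      rw [Pi.zero_apply] at h
      rw [← h]
      exact Finset.sum_congr rfl fun i hi => by rw [← hzu i hi]; simp [hΦ]

end Separation

section Division

variable {σ κ : Type*} [Fintype κ]

lemma totalDegree_aeval_le_of_linear (g : σ → MvPolynomial σ ℝ)
    (hg : ∀ j, (g j).totalDegree ≤ 1) (s : σ →₀ ℕ) :
    (aeval g (monomial s (1 : ℝ))).totalDegree ≤ s.degree := by
  rw [aeval_monomial, map_one, one_mul, Finsupp.prod]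
  refine (totalDegree_finsetProd _ _).trans ?_
  rw [Finsupp.degree_apply]
  refine Finset.sum_le_sum fun j _ => (totalDegree_pow _ _).trans ?_
  simpa using Nat.mul_le_mul_left (s j) (hg j)

lemma exists_monomial_sub_aeval_eq (G : κ → MvPolynomial σ ℝ) (r : σ → κ → ℝ)
    (hG : ∀ i, (G i).totalDegree ≤ 1) (D : ℕ) (s : σ →₀ ℕ) (hs : s.degree ≤ D + 1) :
    ∃ p : κ → MvPolynomial σ ℝ, (∀ i, (p i).totalDegree ≤ D) ∧
      monomial s (1 : ℝ) - aeval (fun j => X j - ∑ i, C (r j i) * G i) (monomial s (1 : ℝ)) =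
        ∑ i, p i * G i := by
  classical
  set g : σ → MvPolynomial σ ℝ := fun j => X j - ∑ i, C (r j i) * G i with hg
  have hg1 : ∀ j, (g j).totalDegree ≤ 1 := fun j => by
    refine (totalDegree_sub _ _).trans (max_le (by simp) ?_)
    refine totalDegree_finsetSum_le fun i _ => ?_
    refine (totalDegree_mul _ _).trans ?_
    simpa using hG i
  induction D generalizing s with
  | zero =>
    rcases Nat.le_one_iff_eq_zero_or_eq_one.1 hs with h | h
    · rw [Finsupp.degree_eq_zero_iff] at h
      exact ⟨0, by simp, by simp [h]⟩
    · obtain ⟨j, rfl⟩ := (Finsupp.sum_eq_one_iff s).1 h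
      refine ⟨fun i => C (r j i), by simp, ?_⟩
      change X j - aeval g (X j) = _
      rw [aeval_X, hg]
      ring
  | succ D ih =>
    rcases eq_or_ne s 0 with rfl | h
    · exact ⟨0, by simp, by simp⟩
    · obtain ⟨j, hj⟩ := Finsupp.ne_iff.1 h
      have hle : Finsupp.single j 1 ≤ s := by
        rw [Finsupp.single_le_iff]
        exact Nat.one_le_iff_ne_zero.2 hj
      obtain ⟨s', rfl⟩ := exists_add_of_le hle
      rw [map_add, Finsupp.degree_single] at hs
      obtain ⟨p, hp, hps⟩ := ih s' (by omega)
      refine ⟨fun i => X j * p i + C (r j i) * aeval g (monomial s' (1 : ℝ)), fun i => ?_, ?_⟩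
      · refine (totalDegree_add _ _).trans (max_le ?_ ?_)
        · refine (totalDegree_mul _ _).trans ?_
          have := hp i
          rw [totalDegree_X]
          omega
        · refine (totalDegree_mul _ _).trans ?_
          have := totalDegree_aeval_le_of_linear g hg1 s'
          rw [totalDegree_C]
          omega
      · have hmul : monomial (Finsupp.single j 1 + s') (1 : ℝ) = X j * monomial s' 1 := by
          rw [X, monomial_mul, one_mul]
        have hsum : ∑ i, (X j * p i + C (r j i) * aeval g (monomial s' (1 : ℝ))) * G i =
            X j * ∑ i, p i * G i + (∑ i, C (r j i) * G i) * aeval g (monomial s' (1 : ℝ)) := by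
          rw [Finset.mul_sum, Finset.sum_mul, ← Finset.sum_add_distrib]
          exact Finset.sum_congr rfl fun i _ => by ring
        rw [hsum, ← hps, hmul, map_mul, aeval_X]
        have : ∑ i, C (r j i) * G i = X j - g j := by simp [hg]
        rw [this]
        ring

/-- Substituting `X j ↦ X j - ∑ i, r j i * G i` changes a polynomial by a combination of the
linear polynomials `G i` whose coefficients have smaller degree. -/
lemma exists_sub_aeval_eq (G : κ → MvPolynomial σ ℝ) (r : σ → κ → ℝ)
    (hG : ∀ i, (G i).totalDegree ≤ 1) (D : ℕ) (f : MvPolynomial σ ℝ)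
    (hf : f.totalDegree ≤ D + 1) :
    ∃ p : κ → MvPolynomial σ ℝ, (∀ i, (p i).totalDegree ≤ D) ∧
      f - aeval (fun j => X j - ∑ i, C (r j i) * G i) f = ∑ i, p i * G i := by
  have hs (s : f.support) : s.1.degree ≤ D + 1 :=
    (le_totalDegree s.2).trans hf
  choose p hp hps using fun s : f.support =>
    exists_monomial_sub_aeval_eq G r hG D s.1 (hs s)
  refine ⟨fun i => ∑ s : f.support, C (f.coeff s.1) * p s i, fun i => ?_, ?_⟩
  · refine totalDegree_finsetSum_le fun s _ => ?_
    refine (totalDegree_mul _ _).trans ?_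
    simpa using hp s i
  · have hf' : f = ∑ s : f.support, C (f.coeff s.1) * monomial s.1 1 := by
      conv_lhs => rw [f.as_sum, ← Finset.sum_coe_sort]
      exact Finset.sum_congr rfl fun s _ => by rw [C_mul_monomial, mul_one]
    conv_lhs => rw [hf']
    simp only [map_sum, map_mul, Finset.sum_mul]
    rw [Finset.sum_comm, ← Finset.sum_sub_distrib]
    refine Finset.sum_congr rfl fun s _ => ?_
    rw [algHom_C, algebraMap_eq, ← mul_sub, hps s, Finset.mul_sum]
    exact Finset.sum_congr rfl fun i _ => by ring

end Division

section AffineDivision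

variable {n m : ℕ}

/-- An affine map without zeros on an affine subspace admits a constant linear combination of its
coordinates equal to `1` there. -/
lemma exists_combination_eq_one (Z : AffineSubspace ℝ (Fin n → ℝ)) (g₀ : Fin m → ℝ)
    (T : (Fin n → ℝ) →ₗ[ℝ] (Fin m → ℝ)) {x₀ : Fin n → ℝ} (hx₀ : x₀ ∈ Z)
    (hno : ∀ x ∈ Z, g₀ + T x ≠ 0) :
    ∃ c : Fin m → ℝ, ∀ x ∈ Z, ∑ j, c j * (g₀ + T x) j = 1 := by
  have hmem : g₀ + T x₀ ∉ Z.direction.map T := by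
    rintro ⟨w, hw, hwx⟩
    refine hno (-w +ᵥ x₀) (AffineSubspace.vadd_mem_of_mem_direction (neg_mem hw) hx₀) ?_
    rw [vadd_eq_add, map_add, map_neg, hwx]
    abel
  obtain ⟨f, hf, hker⟩ := Submodule.exists_le_ker_of_notMem hmem
  refine ⟨fun j => f (Pi.single j 1) / f (g₀ + T x₀), fun x hx => ?_⟩
  have hfx : f (g₀ + T x) = f (g₀ + T x₀) := by
    have := hker ⟨x - x₀, AffineSubspace.vsub_mem_direction hx hx₀, rfl⟩
    rw [LinearMap.mem_ker, map_sub, map_sub, sub_eq_zero] at this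
    rw [map_add, map_add, this]
  have hsum : f (g₀ + T x) = ∑ j, f (Pi.single j 1) * (g₀ + T x) j := by
    conv_lhs => rw [pi_eq_sum_univ' (g₀ + T x)]
    simp only [map_sum, map_smul, smul_eq_mul]
    exact Finset.sum_congr rfl fun j _ => mul_comm _ _
  calc ∑ j, f (Pi.single j 1) / f (g₀ + T x₀) * (g₀ + T x) j
      = (∑ j, f (Pi.single j 1) * (g₀ + T x) j) / f (g₀ + T x₀) := by
        rw [Finset.sum_div]
        exact Finset.sum_congr rfl fun j _ => by ring
    _ = 1 := by rw [← hsum, hfx, div_self hf]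

/-- A polynomial vanishing on the zero set of linear polynomials `G j` inside an affine subspace
`Z` is on `Z` a combination of the `G j` whose coefficients have smaller degree. -/
lemma exists_division_on_affineSubspace (Z : AffineSubspace ℝ (Fin n → ℝ)) (g₀ : Fin m → ℝ)
    (T : (Fin n → ℝ) →ₗ[ℝ] (Fin m → ℝ)) (G : Fin m → MvPolynomial (Fin n) ℝ)
    (hG : ∀ j, (G j).totalDegree ≤ 1) (hGT : ∀ x j, eval x (G j) = (g₀ + T x) j)
    {x₀ : Fin n → ℝ} (hx₀ : x₀ ∈ Z) (hz₀ : g₀ + T x₀ = 0) (D : ℕ)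
    (f : MvPolynomial (Fin n) ℝ) (hf : f.totalDegree ≤ D + 1)
    (hvan : ∀ x ∈ Z, g₀ + T x = 0 → eval x f = 0) :
    ∃ p : Fin m → MvPolynomial (Fin n) ℝ, (∀ j, (p j).totalDegree ≤ D) ∧
      ∀ x ∈ Z, eval x f = ∑ j, eval x (p j) * eval x (G j) := by
  set T' : Z.direction →ₗ[ℝ] (Fin m → ℝ) := T ∘ₗ Z.direction.subtype
  obtain ⟨S, hS⟩ := T'.rangeRestrict.exists_rightInverse_of_surjective T'.range_rangeRestrict
  obtain ⟨R, hR⟩ := LinearMap.exists_extend S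
  have hRT (w : Z.direction) : T (R (T w) : Fin n → ℝ) = T w := by
    have h1 : R (T w) = S (T'.rangeRestrict w) := by
      rw [← hR]
      rfl
    rw [h1]
    exact congrArg Subtype.val (LinearMap.congr_fun hS (T'.rangeRestrict w))
  obtain ⟨p, hp, hpf⟩ := exists_sub_aeval_eq G
    (fun j i => (R (Pi.single i 1) : Fin n → ℝ) j) hG D f hf
  refine ⟨p, hp, fun x hx => ?_⟩
  have hxw : x - x₀ ∈ Z.direction := AffineSubspace.vsub_mem_direction hx hx₀
  have hgx : g₀ + T x = T (x - x₀) := by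
    rw [map_sub, eq_neg_of_add_eq_zero_right hz₀]
    abel
  have hsubst : (fun j => eval x (X j - ∑ i, C ((R (Pi.single i 1) : Fin n → ℝ) j) * G i)) =
      x - (R (g₀ + T x) : Fin n → ℝ) := by
    ext j
    conv_rhs => rw [pi_eq_sum_univ' (g₀ + T x)]
    simp only [map_sub, eval_X, map_sum, map_mul, eval_C, hGT, map_smul, Pi.sub_apply,
      Submodule.coe_sum, Submodule.coe_smul, Finset.sum_apply, Pi.smul_apply, smul_eq_mul]
    congr 1
    exact Finset.sum_congr rfl fun i _ => mul_comm _ _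
  have hzero : eval x (aeval (fun j => X j - ∑ i, C ((R (Pi.single i 1) : Fin n → ℝ) j) * G i) f)
      = 0 := by
    change aeval x (aeval _ f) = 0
    rw [← AlgHom.comp_apply, comp_aeval]
    change eval (fun j => eval x (X j - ∑ i, C ((R (Pi.single i 1) : Fin n → ℝ) j) * G i)) f = 0
    rw [hsubst]
    refine hvan _ ?_ ?_
    · have := AffineSubspace.vadd_mem_of_mem_direction
        (neg_mem (R (g₀ + T x)).2) hx
      rwa [vadd_eq_add, neg_add_eq_sub] at this
    · rw [map_sub, hgx, hRT ⟨x - x₀, hxw⟩, ← hgx]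
      abel
  have := congrArg (eval x) hpf
  rw [map_sub, hzero, sub_zero] at this
  simpa using this

end AffineDivision

section QuadraticModule

variable {n m : ℕ} {A : Fin (n + 1) → Matrix (Fin m) (Fin m) ℝ}

lemma memQMdeg_zero (k : ℕ) : memQMdeg A k 0 :=
  ⟨0, 0, Fin.elim0, Fin.elim0, fun i => i.elim0, fun i => i.elim0, by simp⟩

lemma memQMdeg_sq {k : ℕ} {q : MvPolynomial (Fin n) ℝ} (hq : q.totalDegree ≤ k) :
    memQMdeg A k (q ^ 2) :=
  ⟨1, 0, fun _ => q, Fin.elim0, fun _ => hq, fun i => i.elim0, by simp⟩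

lemma memQMdeg_vLv {k : ℕ} {v : Fin m → MvPolynomial (Fin n) ℝ}
    (hv : ∀ a, (v a).totalDegree ≤ k) : memQMdeg A k (vLv A v) :=
  ⟨0, 1, Fin.elim0, fun _ => v, fun i => i.elim0, fun _ => hv, by simp⟩

lemma memQMdeg.mono {k l : ℕ} (hkl : k ≤ l) {f : MvPolynomial (Fin n) ℝ}
    (hf : memQMdeg A k f) : memQMdeg A l f := by
  obtain ⟨k₁, k₂, q, v, hq, hv, rfl⟩ := hf
  exact ⟨k₁, k₂, q, v, fun i => (hq i).trans hkl, fun j a => (hv j a).trans hkl, rfl⟩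

lemma memQMdeg.add {k : ℕ} {f g : MvPolynomial (Fin n) ℝ}
    (hf : memQMdeg A k f) (hg : memQMdeg A k g) : memQMdeg A k (f + g) := by
  obtain ⟨k₁, k₂, q, v, hq, hv, rfl⟩ := hf
  obtain ⟨l₁, l₂, q', v', hq', hv', rfl⟩ := hg
  refine ⟨k₁ + l₁, k₂ + l₂, Fin.append q q', Fin.append v v', fun i => ?_, fun j => ?_, ?_⟩
  · refine Fin.addCases (fun i => ?_) (fun i => ?_) i
    · simpa using hq i
    · simpa using hq' i
  · refine Fin.addCases (fun i => ?_) (fun i => ?_) j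
    · simpa using hv i
    · simpa using hv' i
  · simp only [Fin.sum_univ_add, Fin.append_left, Fin.append_right]
    ring

lemma memQMdeg_sum {ι : Type*} {k : ℕ} (s : Finset ι) (f : ι → MvPolynomial (Fin n) ℝ)
    (hf : ∀ i ∈ s, memQMdeg A k (f i)) : memQMdeg A k (∑ i ∈ s, f i) :=
  Finset.sum_induction f (memQMdeg A k) (fun _ _ => memQMdeg.add) (memQMdeg_zero k) hf

lemma vLv_mul (g : MvPolynomial (Fin n) ℝ) (v : Fin m → MvPolynomial (Fin n) ℝ) :
    vLv A (fun a => g * v a) = g ^ 2 * vLv A v := by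
  simp only [vLv, Finset.mul_sum]
  exact Finset.sum_congr rfl fun a _ => Finset.sum_congr rfl fun b _ => by ring

lemma memQMdeg.sq_mul {k d : ℕ} {f g : MvPolynomial (Fin n) ℝ} (hg : g.totalDegree ≤ d)
    (hf : memQMdeg A k f) : memQMdeg A (d + k) (g ^ 2 * f) := by
  obtain ⟨k₁, k₂, q, v, hq, hv, rfl⟩ := hf
  refine ⟨k₁, k₂, fun i => g * q i, fun j a => g * v j a,
    fun i => (totalDegree_mul _ _).trans (add_le_add hg (hq i)),
    fun j a => (totalDegree_mul _ _).trans (add_le_add hg (hv j a)), ?_⟩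
  simp only [vLv_mul, mul_pow, mul_add, Finset.mul_sum]

lemma memQMdeg.C_mul {k : ℕ} {c : ℝ} (hc : 0 ≤ c) {f : MvPolynomial (Fin n) ℝ}
    (hf : memQMdeg A k f) : memQMdeg A k (C c * f) := by
  have h := hf.sq_mul (g := C (√c)) (totalDegree_C _).le
  rwa [zero_add, ← map_pow, Real.sq_sqrt hc] at h

lemma totalDegree_pencilPoly_le (a b : Fin m) : (pencilPoly A a b).totalDegree ≤ 1 := by
  refine (totalDegree_add _ _).trans (max_le (by simp) (totalDegree_finsetSum_le fun i _ => ?_))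
  exact (totalDegree_mul _ _).trans (by simp)

lemma memQMdeg.totalDegree_le {k : ℕ} {f : MvPolynomial (Fin n) ℝ} (hf : memQMdeg A k f) :
    f.totalDegree ≤ 2 * k + 1 := by
  obtain ⟨k₁, k₂, q, v, hq, hv, rfl⟩ := hf
  refine (totalDegree_add _ _).trans (max_le ?_ ?_)
  · refine totalDegree_finsetSum_le fun i _ => (totalDegree_pow _ _).trans ?_
    have := hq i
    omega
  · refine totalDegree_finsetSum_le fun j _ => totalDegree_finsetSum_le fun a _ =>
      totalDegree_finsetSum_le fun b _ => ?_
    have h1 := totalDegree_mul (v j a * pencilPoly A a b) (v j b)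
    have h2 := totalDegree_mul (v j a) (pencilPoly A a b)
    have h3 := totalDegree_pencilPoly_le (A := A) a b
    have h4 := hv j a
    have h5 := hv j b
    omega

end QuadraticModule

section Evaluation

variable {n m : ℕ} (A : Fin (n + 1) → Matrix (Fin m) (Fin m) ℝ)

/-- The homogeneous part of a pencil as a linear map. -/
noncomputable def pencilLin : (Fin n → ℝ) →ₗ[ℝ] Matrix (Fin m) (Fin m) ℝ :=
  Fintype.linearCombination ℝ fun i : Fin n => A i.succ

lemma pencilEval_eq_add_pencilLin (x : Fin n → ℝ) : pencilEval A x = A 0 + pencilLin A x := rfl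

lemma pencilEval_add (x w : Fin n → ℝ) :
    pencilEval A (x + w) = pencilEval A x + pencilLin A w := by
  simp only [pencilEval_eq_add_pencilLin, map_add, add_assoc]

lemma eval_pencilPoly (x : Fin n → ℝ) (a b : Fin m) :
    eval x (pencilPoly A a b) = pencilEval A x a b := by
  simp [pencilPoly, pencilEval, Matrix.sum_apply]

lemma eval_vLv (x : Fin n → ℝ) (v : Fin m → MvPolynomial (Fin n) ℝ) :
    eval x (vLv A v) =
      (fun a => eval x (v a)) ⬝ᵥ (pencilEval A x *ᵥ fun a => eval x (v a)) := by
  simp only [vLv, map_sum, map_mul, eval_pencilPoly, dotProduct, mulVec, Finset.mul_sum, mul_assoc]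

variable {A}

lemma pencilEval_isSymm (hsymm : ∀ i, (A i).IsSymm) (x : Fin n → ℝ) :
    (pencilEval A x).IsSymm := by
  unfold pencilEval Matrix.IsSymm
  rw [transpose_add, transpose_sum, hsymm 0]
  simp only [transpose_smul, (hsymm _).eq]

lemma dotProduct_mulVec_comm_of_isSymm {M : Matrix (Fin m) (Fin m) ℝ} (hM : M.IsSymm)
    (u w : Fin m → ℝ) : u ⬝ᵥ (M *ᵥ w) = w ⬝ᵥ (M *ᵥ u) := by
  rw [dotProduct_mulVec, ← mulVec_transpose, hM.eq, dotProduct_comm]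

variable (A)

/-- Constant vectors in the kernel of the pencil along an affine subspace. -/
def commonKernel (Z : AffineSubspace ℝ (Fin n → ℝ)) : Submodule ℝ (Fin m → ℝ) where
  carrier := {v | ∀ x ∈ Z, pencilEval A x *ᵥ v = 0}
  add_mem' hu hv x hx := by rw [mulVec_add, hu x hx, hv x hx, add_zero]
  zero_mem' x _ := mulVec_zero _
  smul_mem' c v hv x hx := by rw [mulVec_smul, hv x hx, smul_zero]

/-- The points of an affine subspace at which the pencil annihilates a given vector. -/
def annihilatedSubspace (Z : AffineSubspace ℝ (Fin n → ℝ)) (v : Fin m → ℝ) :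
    AffineSubspace ℝ (Fin n → ℝ) where
  carrier := {x | x ∈ Z ∧ pencilEval A x *ᵥ v = 0}
  smul_vsub_vadd_mem' c p₁ p₂ p₃ h₁ h₂ h₃ := by
    refine ⟨Z.smul_vsub_vadd_mem c h₁.1 h₂.1 h₃.1, ?_⟩
    have h : pencilLin A (p₁ - p₂) = pencilEval A p₁ - pencilEval A p₂ := by
      simp only [pencilEval_eq_add_pencilLin, map_sub]
      abel
    rw [vadd_eq_add, vsub_eq_sub, add_comm, pencilEval_add, map_smul, h, add_mulVec, smul_mulVec,
      sub_mulVec, h₁.2, h₂.2, h₃.2]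
    simp

end Evaluation

section Reduction

variable {n m : ℕ} {A : Fin (n + 1) → Matrix (Fin m) (Fin m) ℝ}

/-- If the pencil is nonnegative at `x` on a complement of the common kernel,
it is positive semidefinite at `x`. -/
lemma posSemidef_of_nonneg_on_complement (hsymm : ∀ i, (A i).IsSymm)
    {Z : AffineSubspace ℝ (Fin n → ℝ)} {V : Submodule ℝ (Fin m → ℝ)}
    (hV : IsCompl (commonKernel A Z) V) {x : Fin n → ℝ} (hx : x ∈ Z)
    (h : ∀ v ∈ V, 0 ≤ v ⬝ᵥ (pencilEval A x *ᵥ v)) : (pencilEval A x).PosSemidef := by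
  have hs := pencilEval_isSymm hsymm x
  refine PosSemidef.of_dotProduct_mulVec_nonneg
    (by rw [IsHermitian, conjTranspose_eq_transpose_of_trivial, hs.eq]) fun u => ?_
  obtain ⟨k, hk, v, hv, rfl⟩ := Submodule.mem_sup.1
    (hV.sup_eq_top ▸ Submodule.mem_top : u ∈ commonKernel A Z ⊔ V)
  rw [star_trivial, mulVec_add, hk x hx, zero_add, add_dotProduct,
    dotProduct_mulVec_comm_of_isSymm hs k v, hk x hx, dotProduct_zero, zero_add]
  exact h v hv

/-- Dual certificate of infeasibility on an affine subspace, before taking closures. -/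
lemma exists_convex_combination_eq_const (hsymm : ∀ i, (A i).IsSymm) (hinf : specSet A = ∅)
    {Z : AffineSubspace ℝ (Fin n → ℝ)} {x₀ : Fin n → ℝ} (hx₀ : x₀ ∈ Z)
    {V : Submodule ℝ (Fin m → ℝ)} (hV : IsCompl (commonKernel A Z) V) :
    ∃ (c : ℝ) (ι : Type) (s : Finset ι) (w : ι → ℝ) (z : ι → Fin m → ℝ), 0 ≤ c ∧
      (∀ i ∈ s, 0 ≤ w i) ∧ ∑ i ∈ s, w i = 1 ∧ (∀ i ∈ s, z i ∈ V ∧ z i ≠ 0) ∧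
      ∀ x ∈ Z, ∑ i ∈ s, w i * (z i ⬝ᵥ (pencilEval A x *ᵥ z i)) = -c := by
  obtain ⟨P, hP⟩ := Z.direction.subtype.exists_leftInverse_of_injective Z.direction.ker_subtype
  set q : Fin n → (Fin m → ℝ) → ℝ := fun j v =>
    v ⬝ᵥ (pencilLin A (P (Pi.single j 1)) *ᵥ v) with hq
  have hT : IsCompact (Metric.sphere (0 : Fin m → ℝ) 1 ∩ V) :=
    (isCompact_sphere 0 1).inter_right V.closed_of_finiteDimensional
  have hform (y : Fin n → ℝ) (v : Fin m → ℝ) :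
      v ⬝ᵥ (pencilEval A (x₀ + P y) *ᵥ v) =
        v ⬝ᵥ (pencilEval A x₀ *ᵥ v) + ∑ j, y j * q j v := by
    rw [pencilEval_add, add_mulVec, dotProduct_add]
    congr 1
    conv_lhs => rw [pi_eq_sum_univ' y]
    simp only [map_sum, map_smul, Submodule.coe_sum, Submodule.coe_smul, sum_mulVec, smul_mulVec,
      dotProduct_sum, dotProduct_smul, smul_eq_mul, hq]
  rcases exists_nonneg_or_exists_convex_combination hT
    (q₀ := fun v => v ⬝ᵥ (pencilEval A x₀ *ᵥ v)) (q := q) (by fun_prop) (fun j => by fun_prop) with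
    ⟨y, hy⟩ | ⟨c, ι, s, w, z, hc, hw, hw1, hz, hz₀, hzj⟩
  · exfalso
    have hmem : x₀ + P y ∈ Z := by
      rw [add_comm]
      exact AffineSubspace.vadd_mem_of_mem_direction (P y).2 hx₀
    have hpsd : x₀ + P y ∈ specSet A := by
      refine posSemidef_of_nonneg_on_complement hsymm hV hmem fun v hv => ?_
      rcases eq_or_ne v 0 with rfl | hv0
      · simp
      · have hn : 0 < ‖v‖ := norm_pos_iff.2 hv0
        have h1 := hy (‖v‖⁻¹ • v)
          ⟨by simp [norm_smul, hn.ne'], V.smul_mem _ hv⟩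
        rw [← hform, mulVec_smul, smul_dotProduct, dotProduct_smul, smul_eq_mul, smul_eq_mul] at h1
        have hi : 0 < ‖v‖⁻¹ := inv_pos.2 hn
        exact nonneg_of_mul_nonneg_right (nonneg_of_mul_nonneg_right h1 hi) hi
    rw [hinf] at hpsd
    exact hpsd
  · refine ⟨c, ι, s, w, z, hc, hw, hw1, fun i hi => ⟨(hz i hi).2, ?_⟩, fun x hx => ?_⟩
    · exact ne_zero_of_mem_unit_sphere (⟨z i, (hz i hi).1⟩ : Metric.sphere (0 : Fin m → ℝ) 1)
    · have hxP : x = x₀ + P (x - x₀) := by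
        have := LinearMap.congr_fun hP ⟨x - x₀, AffineSubspace.vsub_mem_direction hx hx₀⟩
        simp only [LinearMap.comp_apply, Submodule.subtype_apply, LinearMap.id_apply] at this
        rw [this]
        simp
      rw [hxP]
      simp only [hform, mul_add, Finset.sum_add_distrib, Finset.mul_sum]
      rw [hz₀, Finset.sum_comm, add_eq_left]
      refine Finset.sum_eq_zero fun j _ => ?_
      simp only [mul_left_comm (w _)]
      rw [← Finset.mul_sum, hzj, mul_zero]

lemma eval_vLv_const (x : Fin n → ℝ) (v : Fin m → ℝ) :
    eval x (vLv A fun a => C (v a)) = v ⬝ᵥ (pencilEval A x *ᵥ v) := by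
  simp [eval_vLv]

lemma memQMdeg_weighted_sum {ι : Type*} (s : Finset ι) {w : ι → ℝ} (hw : ∀ i ∈ s, 0 ≤ w i)
    (z : ι → Fin m → ℝ) :
    memQMdeg A 0 (∑ i ∈ s, C (w i) * vLv A fun a => C (z i a)) :=
  memQMdeg_sum _ _ fun i hi => (memQMdeg_vLv fun _ => (totalDegree_C _).le).C_mul (hw i hi)

/-- Either `-1` agrees on `Z` with an element of the quadratic module of degree `0`, or the form of
some vector outside the common kernel is both in the module and, up to a polynomial vanishing
on `Z`, in its negative. The second alternative needs a common kernel of codimension above `1`. -/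
lemma exists_certificate_or_exists_isotropic (hsymm : ∀ i, (A i).IsSymm) (hinf : specSet A = ∅)
    {Z : AffineSubspace ℝ (Fin n → ℝ)} {x₀ : Fin n → ℝ} (hx₀ : x₀ ∈ Z) :
    (∃ f, memQMdeg A 0 f ∧ ∀ x ∈ Z, eval x f = -1) ∨
    (Module.finrank ℝ (commonKernel A Z) + 1 < m ∧
      ∃ v ∉ commonKernel A Z, ∃ g, memQMdeg A 0 g ∧
        ∀ x ∈ Z, eval x g = -(v ⬝ᵥ (pencilEval A x *ᵥ v))) := by
  classical
  obtain ⟨V, hV⟩ := (commonKernel A Z).exists_isCompl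
  obtain ⟨c, ι, s, w, z, hc, hw, hw1, hz, hsum⟩ :=
    exists_convex_combination_eq_const hsymm hinf hx₀ hV
  rcases hc.eq_or_lt with rfl | hc
  · right
    obtain ⟨i₀, hi₀, hwi₀⟩ : ∃ i ∈ s, 0 < w i :=
      Finset.exists_lt_of_sum_lt (s := s) (f := fun _ => (0 : ℝ)) (by simp [hw1])
    refine ⟨?_, z i₀, fun hK => ?_, C (w i₀)⁻¹ * ∑ i ∈ s.erase i₀, C (w i) * vLv A fun a => C (z i a),
      (memQMdeg_weighted_sum _ (fun i hi => hw i (Finset.mem_of_mem_erase hi)) z).C_mul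
        (inv_nonneg.2 hwi₀.le), fun x hx => ?_⟩
    · by_contra! hm
      have hfin := Submodule.finrank_add_eq_of_isCompl hV
      rw [Module.finrank_fin_fun] at hfin
      have hV1 : Module.finrank ℝ V ≤ 1 := by omega
      obtain ⟨u, hu, huneg⟩ : ∃ u ∈ V, u ⬝ᵥ (pencilEval A x₀ *ᵥ u) < 0 := by
        by_contra! hall
        have : x₀ ∈ specSet A := posSemidef_of_nonneg_on_complement hsymm hV hx₀ hall
        rw [hinf] at this
        exact this
      have hu0 : (⟨u, hu⟩ : V) ≠ 0 := fun h => by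
        have h0 : u = 0 := congrArg Subtype.val h
        simp [h0] at huneg
      have hneg (i : ι) (hi : i ∈ s) : z i ⬝ᵥ (pencilEval A x₀ *ᵥ z i) < 0 := by
        obtain ⟨hziV, hzi0⟩ := hz i hi
        have hone : Module.finrank ℝ V = 1 :=
          le_antisymm hV1 (Module.finrank_pos_iff_exists_ne_zero.2 ⟨_, hu0⟩)
        obtain ⟨a, ha⟩ := (finrank_eq_one_iff_of_nonzero' _ hu0).1 hone ⟨z i, hziV⟩
        have ha' : a • u = z i := congrArg Subtype.val ha
        have ha0 : a ≠ 0 := by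
          rintro rfl
          exact hzi0 (by rw [← ha', zero_smul])
        rw [← ha', mulVec_smul, smul_dotProduct, dotProduct_smul, smul_eq_mul, smul_eq_mul,
          ← mul_assoc]
        exact mul_neg_of_pos_of_neg (mul_self_pos.2 ha0) huneg
      have := Finset.sum_lt_sum (s := s) (g := fun _ => (0 : ℝ))
        (fun i hi => mul_nonpos_of_nonneg_of_nonpos (hw i hi) (hneg i hi).le)
        ⟨i₀, hi₀, mul_neg_of_pos_of_neg hwi₀ (hneg i₀ hi₀)⟩
      rw [hsum x₀ hx₀] at this
      simp at this
    · exact (hz i₀ hi₀).2 (Submodule.disjoint_def.1 hV.disjoint _ hK (hz i₀ hi₀).1)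
    · have h := hsum x hx
      rw [← Finset.add_sum_erase _ _ hi₀, neg_zero] at h
      simp only [map_mul, map_sum, eval_C, eval_vLv_const]
      rw [eq_neg_of_add_eq_zero_right h]
      field_simp
  · left
    refine ⟨C c⁻¹ * ∑ i ∈ s, C (w i) * vLv A fun a => C (z i a),
      (memQMdeg_weighted_sum s hw z).C_mul (inv_nonneg.2 hc.le), fun x hx => ?_⟩
    simp only [map_mul, map_sum, eval_C, eval_vLv_const]
    rw [hsum x hx]
    field_simp

/-- The coordinates of `L v`. -/
noncomputable def pencilMulVec (A : Fin (n + 1) → Matrix (Fin m) (Fin m) ℝ) (v : Fin m → ℝ)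
    (j : Fin m) : MvPolynomial (Fin n) ℝ :=
  ∑ b, pencilPoly A j b * C (v b)

lemma totalDegree_pencilMulVec_le (v : Fin m → ℝ) (j : Fin m) :
    (pencilMulVec A v j).totalDegree ≤ 1 := by
  refine totalDegree_finsetSum_le fun b _ => (totalDegree_mul _ _).trans ?_
  simpa using totalDegree_pencilPoly_le (A := A) j b

lemma eval_pencilMulVec (v : Fin m → ℝ) (x : Fin n → ℝ) (j : Fin m) :
    eval x (pencilMulVec A v j) = (pencilEval A x *ᵥ v) j := by
  simp [pencilMulVec, eval_pencilPoly, mulVec, dotProduct]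

/-- If `-vᵀLv` is in the module on `Z`, so is minus the square of each coordinate of `L v`. -/
lemma exists_eval_eq_neg_sq (hsymm : ∀ i, (A i).IsSymm) {Z : AffineSubspace ℝ (Fin n → ℝ)}
    {v : Fin m → ℝ} {g : MvPolynomial (Fin n) ℝ} (hg : memQMdeg A 0 g)
    (hgv : ∀ x ∈ Z, eval x g = -(v ⬝ᵥ (pencilEval A x *ᵥ v))) (j : Fin m) :
    ∃ h, memQMdeg A 1 h ∧ ∀ x ∈ Z, eval x h = -(eval x (pencilMulVec A v j)) ^ 2 := by
  set G := pencilMulVec A v j with hG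
  set a : MvPolynomial (Fin n) ℝ := C (-2⁻¹) * (1 + pencilPoly A j j) with ha
  have ha1 : a.totalDegree ≤ 1 := by
    refine (totalDegree_mul _ _).trans ?_
    rw [totalDegree_C, zero_add]
    exact (totalDegree_add _ _).trans (max_le (by simp) (totalDegree_pencilPoly_le j j))
  refine ⟨vLv A (fun b => a * C (v b) + G * C ((Pi.single j 1 : Fin m → ℝ) b)) + a ^ 2 * g,
    (memQMdeg_vLv fun b => ?_).add (hg.sq_mul ha1), fun x hx => ?_⟩
  · refine (totalDegree_add _ _).trans (max_le ?_ ?_)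
    · exact (totalDegree_mul _ _).trans (by simpa using ha1)
    · exact (totalDegree_mul _ _).trans (by simpa using totalDegree_pencilMulVec_le v j)
  · have hvec : (fun b => eval x (a * C (v b) + G * C ((Pi.single j 1 : Fin m → ℝ) b))) =
        eval x a • v + eval x G • (Pi.single j 1 : Fin m → ℝ) := by
      ext b
      simp
    have hcomm := dotProduct_mulVec_comm_of_isSymm (pencilEval_isSymm hsymm x) v (Pi.single j 1)
    have h1 : (Pi.single j 1 : Fin m → ℝ) ⬝ᵥ (pencilEval A x *ᵥ v) = eval x G := by
      rw [hG, eval_pencilMulVec, single_one_dotProduct]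
    have h2 : (Pi.single j 1 : Fin m → ℝ) ⬝ᵥ (pencilEval A x *ᵥ Pi.single j 1) =
        pencilEval A x j j := by
      rw [single_one_dotProduct, mulVec_single_one, col_apply]
    have h3 : eval x a = -2⁻¹ * (1 + pencilEval A x j j) := by
      simp [ha, eval_pencilPoly]
    rw [map_add, map_mul, map_pow, hgv x hx, eval_vLv, hvec]
    simp only [mulVec_add, mulVec_smul, add_dotProduct, dotProduct_add, smul_dotProduct,
      dotProduct_smul, smul_eq_mul, hcomm, h1, h2]
    rw [h3]
    ring

/-- Lifting a certificate from the zero set of `L v` in `Z` to `Z`, given in divided form. -/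
lemma exists_certificate_of_division {Z : AffineSubspace ℝ (Fin n → ℝ)} {k : ℕ}
    {f : MvPolynomial (Fin n) ℝ} (hf : memQMdeg A k f) {G p h : Fin m → MvPolynomial (Fin n) ℝ}
    (hG : ∀ j, (G j).totalDegree ≤ 1) (hp : ∀ j, (p j).totalDegree ≤ 2 * k)
    (hh : ∀ j, memQMdeg A 1 (h j)) (hhG : ∀ j, ∀ x ∈ Z, eval x (h j) = -(eval x (G j)) ^ 2)
    (hfp : ∀ x ∈ Z, eval x f + 1 = ∑ j, eval x (p j) * eval x (G j)) :
    ∃ f', memQMdeg A (2 * k + 1) f' ∧ ∀ x ∈ Z, eval x f' = -1 := by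
  rcases Nat.eq_zero_or_pos m with rfl | hm
  · exact ⟨f, hf.mono (by omega), fun x hx => by
      have := hfp x hx
      rw [Finset.univ_eq_empty, Finset.sum_empty] at this
      linarith⟩
  have hm' : (0 : ℝ) < m := by exact_mod_cast hm
  refine ⟨C 2 * f + ∑ j, C (m : ℝ) * ((p j * G j - C (m : ℝ)⁻¹) ^ 2 + p j ^ 2 * h j),
    ((hf.mono (by omega)).C_mul two_pos.le).add (memQMdeg_sum _ _ fun j _ =>
      ((memQMdeg_sq ?_).add ((hh j).sq_mul (hp j))).C_mul hm'.le), fun x hx => ?_⟩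
  · refine (totalDegree_sub _ _).trans (max_le ?_ (by simp))
    exact (totalDegree_mul _ _).trans (add_le_add (hp j) (hG j))
  · have hj (j : Fin m) : (m : ℝ) * ((eval x (p j) * eval x (G j) - (m : ℝ)⁻¹) ^ 2 +
        eval x (p j) ^ 2 * eval x (h j)) = (m : ℝ)⁻¹ - 2 * (eval x (p j) * eval x (G j)) := by
      rw [hhG j x hx]
      field_simp
      ring
    simp only [map_add, map_sub, map_mul, map_sum, map_pow, eval_C, hj]
    rw [Finset.sum_sub_distrib, ← Finset.mul_sum, ← hfp x hx, Finset.sum_const, Finset.card_univ,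
      Fintype.card_fin, nsmul_eq_mul, mul_inv_cancel₀ hm'.ne']
    ring

/-- On every nonempty affine subspace `Z`, the constant `-1` agrees with an element of the
truncated quadratic module whose degree is controlled by the dimension of `Z` and by the
codimension of the common kernel of the pencil on `Z`. -/
lemma exists_certificate_on_affineSubspace (hsymm : ∀ i, (A i).IsSymm) (hinf : specSet A = ∅)
    (t : ℕ) (Z : AffineSubspace ℝ (Fin n → ℝ)) {x₀ : Fin n → ℝ} (hx₀ : x₀ ∈ Z)
    (ht : Module.finrank ℝ Z.direction ≤ t ∨ m ≤ Module.finrank ℝ (commonKernel A Z) + t + 1) :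
    ∃ f, memQMdeg A (2 ^ t - 1) f ∧ ∀ x ∈ Z, eval x f = -1 := by
  induction t generalizing Z x₀ with
  | zero =>
    rcases exists_certificate_or_exists_isotropic hsymm hinf hx₀ with h | ⟨hcodim, -⟩
    · exact h
    · rcases ht with ht | ht
      · have hdir : Z.direction = ⊥ := Submodule.finrank_eq_zero.1 (Nat.le_zero.1 ht)
        obtain ⟨u, hu⟩ : ∃ u, u ⬝ᵥ (pencilEval A x₀ *ᵥ u) < 0 := by
          by_contra! hall
          have : x₀ ∈ specSet A := posSemidef_of_nonneg_on_complement hsymm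
            (commonKernel A Z).exists_isCompl.choose_spec hx₀ fun v _ => hall v
          rw [hinf] at this
          exact this
        refine ⟨C (-(u ⬝ᵥ (pencilEval A x₀ *ᵥ u)))⁻¹ * vLv A fun a => C (u a),
          (memQMdeg_vLv fun _ => (totalDegree_C _).le).C_mul
            (inv_nonneg.2 (neg_nonneg.2 hu.le)), fun x hx => ?_⟩
        have hxx : x - x₀ ∈ Z.direction := AffineSubspace.vsub_mem_direction hx hx₀
        rw [hdir, Submodule.mem_bot, sub_eq_zero] at hxx
        rw [hxx, map_mul, eval_C, eval_vLv_const, inv_neg, neg_mul, inv_mul_cancel₀ hu.ne]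
      · omega
  | succ t ih =>
    have hpow : 2 ^ (t + 1) - 1 = 2 * (2 ^ t - 1) + 1 := by
      have := Nat.one_le_two_pow (n := t)
      rw [pow_succ]
      omega
    rcases exists_certificate_or_exists_isotropic hsymm hinf hx₀ with
      ⟨f, hf, hfZ⟩ | ⟨-, v, hv, g, hg, hgv⟩
    · exact ⟨f, hf.mono (Nat.zero_le _), hfZ⟩
    choose h hh hhG using exists_eval_eq_neg_sq hsymm hg hgv
    set T : (Fin n → ℝ) →ₗ[ℝ] (Fin m → ℝ) := (Matrix.mulVecBilin ℝ ℝ).flip v ∘ₗ pencilLin A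
    have hT (x : Fin n → ℝ) : A 0 *ᵥ v + T x = pencilEval A x *ᵥ v := by
      rw [pencilEval_eq_add_pencilLin, add_mulVec]
      rfl
    by_cases hne : ∃ x₁, x₁ ∈ annihilatedSubspace A Z v
    · obtain ⟨x₁, hx₁⟩ := hne
      have hle : annihilatedSubspace A Z v ≤ Z := fun x hx => hx.1
      have hlt : annihilatedSubspace A Z v < Z :=
        lt_of_le_of_ne hle fun heq => hv fun x hx => (heq.ge hx).2
      have hK : commonKernel A Z < commonKernel A (annihilatedSubspace A Z v) :=
        SetLike.lt_iff_le_and_exists.2 ⟨fun u hu x hx => hu x hx.1, v, fun x hx => hx.2, hv⟩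
      have hdim := Submodule.finrank_lt_finrank_of_lt
        (AffineSubspace.direction_lt_of_nonempty hlt ⟨x₁, hx₁⟩)
      have hdimK := Submodule.finrank_lt_finrank_of_lt hK
      obtain ⟨f, hf, hfZ⟩ := ih (annihilatedSubspace A Z v) hx₁
        (ht.imp (fun _ => by omega) fun _ => by omega)
      obtain ⟨p, hp, hpf⟩ := exists_division_on_affineSubspace Z (A 0 *ᵥ v) T (pencilMulVec A v)
        (totalDegree_pencilMulVec_le v) (fun x j => by rw [eval_pencilMulVec, hT]) hx₁.1
        ((hT x₁).trans hx₁.2) (2 * (2 ^ t - 1)) (f + 1)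
        ((totalDegree_add _ _).trans (max_le hf.totalDegree_le (by simp)))
        (fun x hx hx0 => by
          rw [map_add, map_one, hfZ x ⟨hx, (hT x).symm.trans hx0⟩]
          ring)
      rw [hpow]
      exact exists_certificate_of_division hf (totalDegree_pencilMulVec_le v) hp hh hhG
        fun x hx => by rw [← hpf x hx, map_add, map_one]
    · obtain ⟨c, hc⟩ := exists_combination_eq_one Z (A 0 *ᵥ v) T hx₀
        fun x hx hx0 => hne ⟨x, hx, (hT x).symm.trans hx0⟩
      obtain ⟨f, hf, hfZ⟩ := exists_certificate_of_division (Z := Z) (memQMdeg_zero (A := A) 0)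
        (totalDegree_pencilMulVec_le v) (p := fun j => C (c j)) (fun j => by simp) hh hhG
        fun x hx => by
          rw [map_zero, zero_add, ← hc x hx]
          simp only [eval_C, eval_pencilMulVec, hT]
      exact ⟨f, hf.mono (by omega), hfZ⟩

end Reduction

/-- **Corollary.** If `L` is an infeasible linear pencil of size `m` in `n` variables,
then `-1 ∈ M_L^(2^(min {m-1, n}) - 1)`. -/
theorem neg_one_mem_truncatedQM_two_pow_min
    (n m : ℕ) (A : Fin (n+1) → Matrix (Fin m) (Fin m) ℝ)
    (hsymm : ∀ i, (A i).IsSymm)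
    (hinf : specSet A = ∅) :
    memQMdeg A (2^(min (m-1) n) - 1) (-1) := by
  obtain ⟨f, hf, hfZ⟩ := exists_certificate_on_affineSubspace hsymm hinf (min (m - 1) n) ⊤
    (AffineSubspace.mem_top ℝ (Fin n → ℝ) 0) (by
      rcases le_total (m - 1) n with h | h
      · right
        rw [min_eq_left h]
        omega
      · left
        rw [min_eq_right h, AffineSubspace.direction_top, finrank_top, Module.finrank_fin_fun])
  rwa [show (-1 : MvPolynomial (Fin n) ℝ) = f from
    MvPolynomial.funext fun x => by rw [hfZ x (AffineSubspace.mem_top ℝ _ x)]; simp]
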